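/- Let F₄ be the finite field with four elements. A function f : F₄ × F₄ → F₄ is a local permutation polynomial over F₄ if and only if exactly one of the following holds: (i) there exist s₀₀, s₀₁, s₀₂, s₁₀, s₂₀ ∈ F₄ with s₀₁³ + s₀₂³ = 1 and s₁₀³ + s₂₀³ = 1 such that f(x,y) = s₂₀x² + s₀₂y² + s₁₀x + s₀₁y + s₀₀ for all x, y; or (ii) there exist s₀₀, s₀₂, s₁₂, s₂₀, s₂₁, s₂₂ ∈ F₄ with s₂₂³ = s₂₁³ = s₁₂³ = 1, s₂₀(s₂₀s₂₂ + s₂₁²) = 0 and s₀₂(s₀₂s₂₂ + s₁₂²) = 0 such that f(x,y) = (s₂₂xy + s₂₁x + s₁₂y + s₁₂s₂₁s₂₂²)xy + s₂₀x² + s₀₂y² + (s₂₀s₂₂ + s₂₁²)s₁₂s₂₂x + (s₀₂s₂₂ + s₁₂²)s₂₁s₂₂y + s₀₀ for all x, y. Moreover, there are exactly 144 LPPs of type (i) and exactly 432 LPPs of type (ii). -/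

import Mathlib

/-- The field with four elements. -/
abbrev F₄ : Type := GaloisField 2 2

/-- `f : F × F → F` is a local permutation polynomial if both sections
`x ↦ f (x, a)` and `x ↦ f (a, x)` are bijections of `F` for every `a`. -/
def IsLPP {F : Type*} (f : F × F → F) : Prop :=
  ∀ a : F, Function.Bijective (fun x => f (x, a)) ∧ Function.Bijective (fun x => f (a, x))

/-- Type (i): LPPs over `F₄` with separate variables, of the form
`s₂₀x² + s₀₂y² + s₁₀x + s₀₁y + s₀₀` with `s₀₁³ + s₀₂³ = 1 = s₁₀³ + s₂₀³`. -/
def TypeI (f : F₄ × F₄ → F₄) : Prop :=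
  ∃ s₀₀ s₀₁ s₀₂ s₁₀ s₂₀ : F₄,
    s₀₁ ^ 3 + s₀₂ ^ 3 = 1 ∧ s₁₀ ^ 3 + s₂₀ ^ 3 = 1 ∧
    ∀ x y : F₄, f (x, y) = s₂₀ * x ^ 2 + s₀₂ * y ^ 2 + s₁₀ * x + s₀₁ * y + s₀₀

/-- Type (ii): LPPs over `F₄` of degree four. -/
def TypeII (f : F₄ × F₄ → F₄) : Prop :=
  ∃ s₀₀ s₀₂ s₁₂ s₂₀ s₂₁ s₂₂ : F₄,
    s₂₂ ^ 3 = 1 ∧ s₂₁ ^ 3 = 1 ∧ s₁₂ ^ 3 = 1 ∧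
    s₂₀ * (s₂₀ * s₂₂ + s₂₁ ^ 2) = 0 ∧ s₀₂ * (s₀₂ * s₂₂ + s₁₂ ^ 2) = 0 ∧
    ∀ x y : F₄, f (x, y) =
      (s₂₂ * x * y + s₂₁ * x + s₁₂ * y + s₁₂ * s₂₁ * s₂₂ ^ 2) * x * y +
        s₂₀ * x ^ 2 + s₀₂ * y ^ 2 +
        (s₂₀ * s₂₂ + s₂₁ ^ 2) * s₁₂ * s₂₂ * x +
        (s₀₂ * s₂₂ + s₁₂ ^ 2) * s₂₁ * s₂₂ * y + s₀₀


/-- A concrete four-element model of `F₄`. -/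
inductive K4 : Type
  | o | i | w | v

namespace K4

def add : K4 → K4 → K4
  | o, y => y
  | i, o => i | i, i => o | i, w => v | i, v => w
  | w, o => w | w, i => v | w, w => o | w, v => i
  | v, o => v | v, i => w | v, w => i | v, v => o

def mul : K4 → K4 → K4
  | o, _ => o
  | i, y => y
  | w, o => o | w, i => w | w, w => v | w, v => i
  | v, o => o | v, i => v | v, w => i | v, v => w

def eqb : K4 → K4 → Bool
  | o, o => true | i, i => true | w, w => true | v, v => true
  | _, _ => false

theorem eqb_iff (a b : K4) : eqb a b = true ↔ a = b := by
  cases a <;> cases b <;> simp [eqb]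

instance : DecidableEq K4 := fun a b => decidable_of_iff _ (eqb_iff a b)

instance : Fintype K4 := ⟨{o, i, w, v}, by intro x; cases x <;> simp⟩

def allB (p : K4 → Bool) : Bool := p o && (p i && (p w && p v))

theorem allB_iff (p : K4 → Bool) : allB p = true ↔ ∀ x, p x = true := by
  constructor
  · intro h x
    simp only [allB, Bool.and_eq_true] at h
    cases x
    exacts [h.1, h.2.1, h.2.2.1, h.2.2.2]
  · intro h
    simp [allB, h]

def imp (a b : Bool) : Bool := !a || b

theorem imp_iff (a b : Bool) : imp a b = true ↔ (a = true → b = true) := by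
  cases a <;> simp [imp]

def neb (a b : K4) : Bool := !(eqb a b)

theorem neb_iff (a b : K4) : neb a b = true ↔ a ≠ b := by
  cases a <;> cases b <;> simp [neb, eqb]

instance : Add K4 := ⟨add⟩
instance : Mul K4 := ⟨mul⟩

def sq (a : K4) : K4 := a * a
def cu (a : K4) : K4 := a * a * a

def pI (s00 s01 s02 s10 s20 x y : K4) : K4 :=
  s20 * sq x + s02 * sq y + s10 * x + s01 * y + s00

def cI (s01 s02 s10 s20 : K4) : Bool :=
  eqb (cu s01 + cu s02) i && eqb (cu s10 + cu s20) i

def pII (s00 s02 s12 s20 s21 s22 x y : K4) : K4 :=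
  (s22 * x * y + s21 * x + s12 * y + s12 * s21 * sq s22) * x * y +
    s20 * sq x + s02 * sq y +
    (s20 * s22 + sq s21) * s12 * s22 * x +
    (s02 * s22 + sq s12) * s21 * s22 * y + s00

def cII (s02 s12 s20 s21 s22 : K4) : Bool :=
  eqb (cu s22) i && (eqb (cu s21) i && (eqb (cu s12) i &&
    (eqb (s20 * (s20 * s22 + sq s21)) o && eqb (s02 * (s02 * s22 + sq s12)) o)))

def sumK (f : K4 → K4) : K4 := f i + f w + f v

/-- Coefficient recovery by interpolation. -/
def r10 (g : K4 → K4 → K4) : K4 := sumK fun x => sq x * g x o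
def r20 (g : K4 → K4 → K4) : K4 := sumK fun x => x * g x o
def r01 (g : K4 → K4 → K4) : K4 := sumK fun y => sq y * g o y
def r02 (g : K4 → K4 → K4) : K4 := sumK fun y => y * g o y
def r22 (g : K4 → K4 → K4) : K4 := sumK fun x => sumK fun y => x * y * g x y
def r21 (g : K4 → K4 → K4) : K4 := sumK fun x => sumK fun y => x * sq y * g x y
def r12 (g : K4 → K4 → K4) : K4 := sumK fun x => sumK fun y => sq x * y * g x y

def inj (h : K4 → K4) : Bool :=
  neb (h o) (h i) && (neb (h o) (h w) && (neb (h o) (h v) &&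
    (neb (h i) (h w) && (neb (h i) (h v) && neb (h w) (h v)))))

theorem inj_iff (h : K4 → K4) : inj h = true ↔ Function.Injective h := by
  simp only [inj, Bool.and_eq_true, neb_iff]
  constructor
  · rintro ⟨h1, h2, h3, h4, h5, h6⟩ a b hab
    cases a <;> cases b <;> first | rfl | exact absurd hab ‹_› | exact absurd hab.symm ‹_›
  · intro hh
    refine ⟨?_, ?_, ?_, ?_, ?_, ?_⟩ <;> exact fun e => by simpa using hh e

def latin (g : K4 → K4 → K4) : Bool :=
  allB fun a => inj (fun x => g x a) && inj (fun x => g a x)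

def eqg (g h : K4 → K4 → K4) : Bool := allB fun x => allB fun y => eqb (g x y) (h x y)

theorem eqg_iff (g h : K4 → K4 → K4) : eqg g h = true ↔ ∀ x y, g x y = h x y := by
  simp [eqg, allB_iff, eqb_iff]

def force (a : K4) (k : K4 → Bool) : Bool :=
  match a with
  | o => k o
  | i => k i
  | w => k w
  | v => k v

theorem force_eq (a : K4) (k : K4 → Bool) : force a k = k a := by cases a <;> rfl

def memI (g : K4 → K4 → K4) : Bool :=
  force (r01 g) fun s01 => force (r02 g) fun s02 => force (r10 g) fun s10 =>
  force (r20 g) fun s20 => cI s01 s02 s10 s20 && eqg g (pI (g o o) s01 s02 s10 s20)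

def memII (g : K4 → K4 → K4) : Bool :=
  force (r02 g) fun s02 => force (r12 g) fun s12 => force (r20 g) fun s20 =>
  force (r21 g) fun s21 => force (r22 g) fun s22 =>
  cII s02 s12 s20 s21 s22 && eqg g (pII (g o o) s02 s12 s20 s21 s22)

def checkI : Bool :=
  allB fun s01 => allB fun s02 => allB fun s10 => allB fun s20 =>
  imp (cI s01 s02 s10 s20) (allB fun s00 =>
    latin (pI s00 s01 s02 s10 s20) && (eqb (r22 (pI s00 s01 s02 s10 s20)) o &&
    (eqb (pI s00 s01 s02 s10 s20 o o) s00 &&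
    (eqb (r01 (pI s00 s01 s02 s10 s20)) s01 && (eqb (r02 (pI s00 s01 s02 s10 s20)) s02 &&
    (eqb (r10 (pI s00 s01 s02 s10 s20)) s10 && eqb (r20 (pI s00 s01 s02 s10 s20)) s20))))))

def checkII : Bool :=
  allB fun s02 => allB fun s12 => allB fun s20 => allB fun s21 => allB fun s22 =>
  imp (cII s02 s12 s20 s21 s22) (allB fun s00 =>
    latin (pII s00 s02 s12 s20 s21 s22) && (neb (r22 (pII s00 s02 s12 s20 s21 s22)) o &&
    (eqb (pII s00 s02 s12 s20 s21 s22 o o) s00 &&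
    (eqb (r02 (pII s00 s02 s12 s20 s21 s22)) s02 && (eqb (r12 (pII s00 s02 s12 s20 s21 s22)) s12 &&
    (eqb (r20 (pII s00 s02 s12 s20 s21 s22)) s20 && (eqb (r21 (pII s00 s02 s12 s20 s21 s22)) s21 &&
    eqb (r22 (pII s00 s02 s12 s20 s21 s22)) s22)))))))

theorem checkI_true : checkI = true := by decide +kernel

theorem checkII_true : checkII = true := by decide +kernel

/-- A row as a function. -/
def row (a b c d : K4) : K4 → K4
  | o => a | i => b | w => c | v => d

theorem row_eta (h : K4 → K4) : row (h o) (h i) (h w) (h v) = h := by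
  funext x; cases x <;> rfl

def tab (r0 r1 r2 r3 : K4 → K4) : K4 → K4 → K4
  | o => r0 | i => r1 | w => r2 | v => r3

theorem tab_eta (g : K4 → K4 → K4) : tab (g o) (g i) (g w) (g v) = g := by
  funext x; cases x <;> rfl

/-- Quantify over all injective rows. -/
def allRows (p : (K4 → K4) → Bool) : Bool :=
  allB fun a => allB fun b => imp (neb a b) (allB fun c => imp (neb a c && neb b c)
    (allB fun d => imp (neb a d && (neb b d && neb c d)) (p (row a b c d))))

theorem allRows_apply (p : (K4 → K4) → Bool) (hp : allRows p = true) (h : K4 → K4)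
    (hh : Function.Injective h) : p h = true := by
  simp only [allRows, allB_iff, imp_iff, Bool.and_eq_true, neb_iff] at hp
  have key : ∀ x y : K4, x ≠ y → h x ≠ h y := fun x y hxy => hh.ne hxy
  have := hp (h o) (h i) (key _ _ (by decide)) (h w) ⟨key _ _ (by decide), key _ _ (by decide)⟩
    (h v) ⟨key _ _ (by decide), key _ _ (by decide), key _ _ (by decide)⟩
  rwa [row_eta] at this

def compat (r s : K4 → K4) : Bool :=
  neb (r o) (s o) && (neb (r i) (s i) && (neb (r w) (s w) && neb (r v) (s v)))

theorem compat_of (r s : K4 → K4) (h : ∀ x, r x ≠ s x) : compat r s = true := by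
  simp [compat, neb_iff, h]

def checkL : Bool :=
  allRows fun r0 => allRows fun r1 => imp (compat r0 r1) (allRows fun r2 =>
    imp (compat r0 r2 && compat r1 r2) (allRows fun r3 =>
      imp (compat r0 r3 && (compat r1 r3 && compat r2 r3))
        (memI (tab r0 r1 r2 r3) || memII (tab r0 r1 r2 r3))))

theorem checkL_true : checkL = true := by decide +kernel

theorem latin_iff (g : K4 → K4 → K4) : latin g = true ↔
    ∀ a, Function.Injective (fun x => g x a) ∧ Function.Injective (fun x => g a x) := by
  simp [latin, allB_iff, inj_iff]

theorem latin_mem (g : K4 → K4 → K4) (hg : latin g = true) :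
    memI g = true ∨ memII g = true := by
  rw [latin_iff] at hg
  have hr : ∀ a, Function.Injective (g a) := fun a => (hg a).2
  have hc : ∀ a b, a ≠ b → compat (g a) (g b) = true := fun a b hab =>
    compat_of _ _ fun x hx => hab ((hg x).1 hx)
  have h0 := allRows_apply _ checkL_true (g o) (hr o)
  have h1 := allRows_apply _ h0 (g i) (hr i)
  have h2 := allRows_apply _ ((imp_iff _ _).1 h1 (hc _ _ (by decide))) (g w) (hr w)
  have h3 := allRows_apply _ ((imp_iff _ _).1 h2
    (by rw [hc _ _ (by decide), hc _ _ (by decide)]; rfl)) (g v) (hr v)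
  have h4 := (imp_iff _ _).1 h3
    (by rw [hc _ _ (by decide), hc _ _ (by decide), hc _ _ (by decide)]; rfl)
  rw [tab_eta] at h4
  simpa using h4

def TI (g : K4 → K4 → K4) : Prop := ∃ s00 s01 s02 s10 s20 : K4,
  cI s01 s02 s10 s20 = true ∧ ∀ x y, g x y = pI s00 s01 s02 s10 s20 x y

def TII (g : K4 → K4 → K4) : Prop := ∃ s00 s02 s12 s20 s21 s22 : K4,
  cII s02 s12 s20 s21 s22 = true ∧ ∀ x y, g x y = pII s00 s02 s12 s20 s21 s22 x y

theorem memI_TI (g : K4 → K4 → K4) (h : memI g = true) : TI g := by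
  simp only [memI, force_eq, Bool.and_eq_true, eqg_iff] at h
  exact ⟨_, _, _, _, _, h⟩

theorem memII_TII (g : K4 → K4 → K4) (h : memII g = true) : TII g := by
  simp only [memII, force_eq, Bool.and_eq_true, eqg_iff] at h
  exact ⟨_, _, _, _, _, _, h⟩

theorem factsI {s01 s02 s10 s20 : K4} (h : cI s01 s02 s10 s20 = true) (s00 : K4) :
    latin (pI s00 s01 s02 s10 s20) = true ∧ r22 (pI s00 s01 s02 s10 s20) = o ∧
    pI s00 s01 s02 s10 s20 o o = s00 ∧
    r01 (pI s00 s01 s02 s10 s20) = s01 ∧ r02 (pI s00 s01 s02 s10 s20) = s02 ∧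
    r10 (pI s00 s01 s02 s10 s20) = s10 ∧ r20 (pI s00 s01 s02 s10 s20) = s20 := by
  have := checkI_true
  simp only [checkI, allB_iff, imp_iff, Bool.and_eq_true, eqb_iff] at this
  exact this _ _ _ _ h s00

theorem factsII {s02 s12 s20 s21 s22 : K4} (h : cII s02 s12 s20 s21 s22 = true) (s00 : K4) :
    latin (pII s00 s02 s12 s20 s21 s22) = true ∧ r22 (pII s00 s02 s12 s20 s21 s22) ≠ o ∧
    pII s00 s02 s12 s20 s21 s22 o o = s00 ∧
    r02 (pII s00 s02 s12 s20 s21 s22) = s02 ∧ r12 (pII s00 s02 s12 s20 s21 s22) = s12 ∧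
    r20 (pII s00 s02 s12 s20 s21 s22) = s20 ∧ r21 (pII s00 s02 s12 s20 s21 s22) = s21 ∧
    r22 (pII s00 s02 s12 s20 s21 s22) = s22 := by
  have := checkII_true
  simp only [checkII, allB_iff, imp_iff, Bool.and_eq_true, eqb_iff, neb_iff] at this
  exact this _ _ _ _ _ h s00

theorem latin_iff_xor (g : K4 → K4 → K4) : latin g = true ↔ Xor' (TI g) (TII g) := by
  have hI : TI g → latin g = true ∧ r22 g = o := by
    rintro ⟨s00, s01, s02, s10, s20, hc, hg⟩
    have : g = pI s00 s01 s02 s10 s20 := by funext x y; exact hg x y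
    subst this
    exact ⟨(factsI hc s00).1, (factsI hc s00).2.1⟩
  have hII : TII g → latin g = true ∧ r22 g ≠ o := by
    rintro ⟨s00, s02, s12, s20, s21, s22, hc, hg⟩
    have : g = pII s00 s02 s12 s20 s21 s22 := by funext x y; exact hg x y
    subst this
    exact ⟨(factsII hc s00).1, (factsII hc s00).2.1⟩
  constructor
  · intro h
    rcases latin_mem g h with h | h
    · exact Or.inl ⟨memI_TI g h, fun h' => (hII h').2 (hI (memI_TI g h)).2⟩
    · exact Or.inr ⟨memII_TII g h, fun h' => (hII (memII_TII g h)).2 (hI h').2⟩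
  · rintro (h | h)
    · exact (hI h.1).1
    · exact (hII h.1).1

def PI := {p : K4 × K4 × K4 × K4 × K4 // cI p.2.1 p.2.2.1 p.2.2.2.1 p.2.2.2.2 = true}
def PII := {p : K4 × K4 × K4 × K4 × K4 × K4 //
  cII p.2.1 p.2.2.1 p.2.2.2.1 p.2.2.2.2.1 p.2.2.2.2.2 = true}

def fI (p : PI) : K4 → K4 → K4 := pI p.1.1 p.1.2.1 p.1.2.2.1 p.1.2.2.2.1 p.1.2.2.2.2
def fII (p : PII) : K4 → K4 → K4 :=
  pII p.1.1 p.1.2.1 p.1.2.2.1 p.1.2.2.2.1 p.1.2.2.2.2.1 p.1.2.2.2.2.2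

theorem fI_inj : Function.Injective fI := by
  rintro ⟨⟨a, b, c, d, e⟩, h⟩ ⟨⟨a', b', c', d', e'⟩, h'⟩ heq
  simp only [fI] at heq h h'
  obtain ⟨-, -, h1, h2, h3, h4, h5⟩ := factsI h a
  obtain ⟨-, -, h1', h2', h3', h4', h5'⟩ := factsI h' a'
  rw [heq] at h1 h2 h3 h4 h5
  have e1 := h1.symm.trans h1'
  have e2 := h2.symm.trans h2'
  have e3 := h3.symm.trans h3'
  have e4 := h4.symm.trans h4'
  have e5 := h5.symm.trans h5'
  subst e1 e2 e3 e4 e5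
  rfl

theorem fII_inj : Function.Injective fII := by
  rintro ⟨⟨a, b, c, d, e, f⟩, h⟩ ⟨⟨a', b', c', d', e', f'⟩, h'⟩ heq
  simp only [fII] at heq h h'
  obtain ⟨-, -, h1, h2, h3, h4, h5, h6⟩ := factsII h a
  obtain ⟨-, -, h1', h2', h3', h4', h5', h6'⟩ := factsII h' a'
  rw [heq] at h1 h2 h3 h4 h5 h6
  have e1 := h1.symm.trans h1'
  have e2 := h2.symm.trans h2'
  have e3 := h3.symm.trans h3'
  have e4 := h4.symm.trans h4'
  have e5 := h5.symm.trans h5'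
  have e6 := h6.symm.trans h6'
  subst e1 e2 e3 e4 e5 e6
  rfl

theorem TI_iff (g : K4 → K4 → K4) : TI g ↔ g ∈ Set.range fI := by
  constructor
  · rintro ⟨a, b, c, d, e, h, hg⟩
    exact ⟨⟨(a, b, c, d, e), h⟩, by funext x y; exact (hg x y).symm⟩
  · rintro ⟨⟨⟨a, b, c, d, e⟩, h⟩, rfl⟩
    exact ⟨a, b, c, d, e, h, fun _ _ => rfl⟩

theorem TII_iff (g : K4 → K4 → K4) : TII g ↔ g ∈ Set.range fII := by
  constructor
  · rintro ⟨a, b, c, d, e, f, h, hg⟩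
    exact ⟨⟨(a, b, c, d, e, f), h⟩, by funext x y; exact (hg x y).symm⟩
  · rintro ⟨⟨⟨a, b, c, d, e, f⟩, h⟩, rfl⟩
    exact ⟨a, b, c, d, e, f, h, fun _ _ => rfl⟩

def cnt (f : K4 → ℕ) : ℕ := f o + (f i + (f w + f v))

theorem sum_eq (f : K4 → ℕ) : ∑ x, f x = cnt f := by
  have : (Finset.univ : Finset K4) = {o, i, w, v} := rfl
  rw [this]
  simp [cnt]

def ind (b : Bool) : ℕ := cond b 1 0

theorem card_sub {α : Type} [Fintype α] (c : α → Bool) :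
    Nat.card {p : α // c p = true} = ∑ p, ind (c p) := by
  rw [Nat.card_eq_fintype_card, Fintype.card_subtype, Finset.card_filter]
  refine Finset.sum_congr rfl fun p _ => ?_
  cases h : c p <;> simp [ind]

theorem cntI : (cnt fun _ => cnt fun b => cnt fun c => cnt fun d => cnt fun e =>
    ind (cI b c d e)) = 144 := by decide +kernel

theorem cntII : (cnt fun _ => cnt fun b => cnt fun c => cnt fun d => cnt fun e => cnt fun f =>
    ind (cII b c d e f)) = 432 := by decide +kernel

theorem card_PI : Nat.card PI = 144 := by
  unfold PI
  rw [card_sub (fun p : K4 × K4 × K4 × K4 × K4 => cI p.2.1 p.2.2.1 p.2.2.2.1 p.2.2.2.2)]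
  simp only [Fintype.sum_prod_type, sum_eq]
  exact cntI

theorem card_PII : Nat.card PII = 432 := by
  unfold PII
  rw [card_sub (fun p : K4 × K4 × K4 × K4 × K4 × K4 =>
    cII p.2.1 p.2.2.1 p.2.2.2.1 p.2.2.2.2.1 p.2.2.2.2.2)]
  simp only [Fintype.sum_prod_type, sum_eq]
  exact cntII

theorem exists_gen : ∃ z : F₄, z ≠ 0 ∧ z ≠ 1 ∧ z * z = z + 1 := by
  classical
  have hcard : Nat.card F₄ = 4 := by
    have := GaloisField.card 2 2 (by norm_num)
    simpa using this
  have : Fintype F₄ := Fintype.ofFinite _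
  have hcard' : Fintype.card F₄ = 4 := by rw [← Nat.card_eq_fintype_card, hcard]
  obtain ⟨z, hz⟩ : ∃ z : F₄, z ∉ ({0, 1} : Finset F₄) := by
    by_contra hcon
    push Not at hcon
    have h1 : (Finset.univ : Finset F₄) ⊆ {0, 1} := fun x _ => hcon x
    have h2 := Finset.card_le_card h1
    rw [Finset.card_univ, hcard'] at h2
    have h3 := Finset.card_le_two (a := (0 : F₄)) (b := 1)
    omega
  simp only [Finset.mem_insert, Finset.mem_singleton, not_or] at hz
  refine ⟨z, hz.1, hz.2, ?_⟩
  have hp := FiniteField.pow_card z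
  rw [hcard'] at hp
  have h2 : (2 : F₄) = 0 := CharTwo.two_eq_zero
  have h3 : z * ((z - 1) * (z * z - (z + 1))) = 0 := by
    linear_combination hp - (z ^ 3 - z) * h2
  have h4 := (mul_eq_zero.1 h3).resolve_left hz.1
  have h5 := (mul_eq_zero.1 h4).resolve_left (sub_ne_zero.2 hz.2)
  exact sub_eq_zero.1 h5

theorem exists_equiv : ∃ E : K4 ≃ F₄, (∀ a b, E (a + b) = E a + E b) ∧
    (∀ a b, E (a * b) = E a * E b) ∧ E o = 0 ∧ E i = 1 := by
  obtain ⟨z, hz0, hz1, hz⟩ := exists_gen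
  have h2 : (2 : F₄) = 0 := CharTwo.two_eq_zero
  let e : K4 → F₄ := fun x => match x with
    | o => 0 | i => 1 | w => z | v => z + 1
  have hv0 : z + 1 ≠ 0 := fun h => hz1 (by linear_combination h - h2)
  have hv1 : z + 1 ≠ 1 := fun h => hz0 (by linear_combination h)
  have hvz : z + 1 ≠ z := fun h => one_ne_zero (α := F₄) (by linear_combination h)
  have hinj : Function.Injective e := by
    intro a b hab
    cases a <;> cases b <;> simp only [e] at hab <;>
      first
      | rfl
      | exact absurd hab ‹_›
      | exact absurd hab.symm ‹_›
      | exact absurd hab zero_ne_one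
      | exact absurd hab one_ne_zero
  have hcard : Nat.card K4 = Nat.card F₄ := by
    have := GaloisField.card 2 2 (by norm_num)
    rw [this, Nat.card_eq_fintype_card]
    rfl
  have hbij : Function.Bijective e :=
    (Nat.bijective_iff_injective_and_card e).2 ⟨hinj, hcard⟩
  refine ⟨Equiv.ofBijective e hbij, ?_, ?_, rfl, rfl⟩
  · intro a b
    change e (add a b) = e a + e b
    cases a <;> cases b <;> simp only [add, e] <;>
      first
      | ring1
      | linear_combination (-1 : F₄) * h2
      | linear_combination (-z : F₄) * h2
      | linear_combination (-z - 1 : F₄) * h2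
  · intro a b
    change e (mul a b) = e a * e b
    cases a <;> cases b <;> simp only [mul, e] <;>
      first
      | ring1
      | linear_combination (-1 : F₄) * hz
      | linear_combination (-1 : F₄) * hz - z * h2
      | linear_combination (-1 : F₄) * hz - (z + 1) * h2

end K4

open K4

theorem stmt_4 :
    (∀ f : F₄ × F₄ → F₄, IsLPP f ↔ Xor' (TypeI f) (TypeII f)) ∧
    Nat.card {f : F₄ × F₄ → F₄ | TypeI f} = 144 ∧
    Nat.card {f : F₄ × F₄ → F₄ | TypeII f} = 432 := by
  obtain ⟨E, hadd, hmul, h0, h1⟩ := exists_equiv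
  let T : (K4 → K4 → K4) → (F₄ × F₄ → F₄) := fun g z => E (g (E.symm z.1) (E.symm z.2))
  have hTapp : ∀ g x y, T g (E x, E y) = E (g x y) := fun g x y => by simp [T]
  have hTinj : Function.Injective T := by
    intro g h hgh
    funext x y
    apply E.injective
    rw [← hTapp, ← hTapp, hgh]
  have hTsurj : Function.Surjective T := by
    intro f
    refine ⟨fun x y => E.symm (f (E x, E y)), ?_⟩
    funext z
    simp [T]
  have hsq : ∀ a, E (K4.sq a) = E a ^ 2 := fun a => by rw [K4.sq, hmul, pow_two]
  have hcu : ∀ a, E (cu a) = E a ^ 3 := fun a => by rw [K4.cu, hmul, hmul]; ring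
  have hLPP : ∀ g, IsLPP (T g) ↔ latin g = true := by
    intro g
    have hb : ∀ h : K4 → K4, ∀ k : F₄ → F₄, (∀ x, k (E x) = E (h x)) →
        (Function.Bijective k ↔ Function.Injective h) := by
      intro h k hk
      have hkk : k = E ∘ h ∘ E.symm := by
        funext x
        simpa using hk (E.symm x)
      rw [hkk, ← Finite.injective_iff_bijective, E.injective.of_comp_iff,
        Function.Injective.of_comp_iff' _ E.symm.bijective]
    rw [latin_iff, IsLPP, E.surjective.forall]
    refine forall_congr' fun a => and_congr ?_ ?_
    · exact hb _ _ fun x => hTapp g x a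
    · exact hb _ _ fun x => hTapp g a x
  have hI : ∀ g, TypeI (T g) ↔ TI g := by
    intro g
    simp only [TypeI, TI, cI, E.surjective.exists, E.surjective.forall, hTapp, pI,
      ← hsq, ← hcu, ← hadd, ← hmul, ← h1, E.injective.eq_iff, Bool.and_eq_true, eqb_iff, and_assoc]
  have hII : ∀ g, TypeII (T g) ↔ TII g := by
    intro g
    simp only [TypeII, TII, cII, E.surjective.exists, E.surjective.forall, hTapp, pII,
      ← hsq, ← hcu, ← hadd, ← hmul, ← h1, ← h0, E.injective.eq_iff, Bool.and_eq_true, eqb_iff,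
      and_assoc]
  refine ⟨?_, ?_, ?_⟩
  · intro f
    obtain ⟨g, rfl⟩ := hTsurj f
    rw [hLPP, hI, hII, latin_iff_xor]
  · have : {f : F₄ × F₄ → F₄ | TypeI f} = Set.range (T ∘ fI) := by
      ext f
      obtain ⟨g, rfl⟩ := hTsurj f
      rw [Set.mem_ofPred_eq, hI, TI_iff, Set.range_comp, hTinj.mem_set_image]
    rw [this, Nat.card_range_of_injective (hTinj.comp fI_inj), card_PI]
  · have : {f : F₄ × F₄ → F₄ | TypeII f} = Set.range (T ∘ fII) := by
      ext f
      obtain ⟨g, rfl⟩ := hTsurj f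
      rw [Set.mem_ofPred_eq, hII, TII_iff, Set.range_comp, hTinj.mem_set_image]
    rw [this, Nat.card_range_of_injective (hTinj.comp fII_inj), card_PII]
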